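/- arXiv:1803.08640 — 2 statements merged into one kernel-verified Lean document; each statement's English description precedes it below -/
import Mathlib

section
/- Let ν_T, θ_T, ν_I, θ_I > 0 and β > 0. Let T and I be independent real random variables such that T is Gamma-distributed with shape ν_T and scale θ_T, and I is Gamma-distributed with shape ν_I and scale θ_I. Set q = β θ_I / θ_T. Then P(T < β I) = 1 − (q^{ν_T} Γ(ν_T + ν_I)) / (ν_I (q + 1)^{ν_T + ν_I} Γ(ν_T) Γ(ν_I)) · ₂F₁(1, ν_T + ν_I; ν_I + 1; 1/(q + 1)). -/
open MeasureTheory ProbabilityTheory Polynomial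

/-- The Gauss hypergeometric series `₂F₁(1, b; c; x) = ∑_k ((b)_k / (c)_k) x^k`,
where `(a)_k` is the ascending Pochhammer symbol. -/
noncomputable def hyp2F1One (b c x : ℝ) : ℝ :=
  ∑' k : ℕ, ((ascPochhammer ℝ k).eval b / (ascPochhammer ℝ k).eval c) * x ^ k


lemma aux_beta (a y : ℝ) (ha : 0 < a) (hy : 0 < y) (k : ℕ) :
    ∫⁻ x in Set.Ioc 0 y, ENNReal.ofReal (x ^ (a - 1) * (y - x) ^ k) =
      ENNReal.ofReal (y ^ (a + k) * (Real.Gamma a * k.factorial / Real.Gamma (a + k + 1))) := by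
  have h1 : ∫ x in (0 : ℝ)..y, x ^ (a - 1) * (y - x) ^ k =
      y ^ (a + k) * (Real.Gamma a * k.factorial / Real.Gamma (a + k + 1)) := by
    have h := Complex.betaIntegral_scaled (a : ℂ) ((k : ℂ) + 1) hy
    rw [Complex.betaIntegral_eq_Gamma_mul_div _ _ (by simpa) (by simp; positivity),
      Complex.Gamma_nat_eq_factorial] at h
    rw [← Complex.ofReal_inj, ← intervalIntegral.integral_ofReal]
    have e : ∫ x in (0 : ℝ)..y, ((x ^ (a - 1) * (y - x) ^ k : ℝ) : ℂ) =
        ∫ x in (0 : ℝ)..y, (x : ℂ) ^ ((a : ℂ) - 1) * ((y : ℂ) - x) ^ ((k : ℂ) + 1 - 1) := by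
      refine intervalIntegral.integral_congr fun x hx => ?_
      rw [Set.uIcc_of_le hy.le] at hx
      simp only [add_sub_cancel_right, Complex.cpow_natCast]
      push_cast
      rw [Complex.ofReal_cpow hx.1]
      push_cast
      rfl
    rw [e, h]
    push_cast
    rw [Complex.ofReal_cpow hy.le, ← Complex.Gamma_ofReal, ← Complex.Gamma_ofReal]
    push_cast
    congr 2
    · ring
    · ring_nf
  rw [← h1, intervalIntegral.integral_of_le hy.le]
  rw [ofReal_integral_eq_lintegral_ofReal]
  · by_contra hc
    have := integral_undef hc
    rw [← intervalIntegral.integral_of_le hy.le, h1] at this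
    have h2 : 0 < Real.Gamma (a + k + 1) := Real.Gamma_pos_of_pos (by positivity)
    have h3 : 0 < Real.Gamma a := Real.Gamma_pos_of_pos ha
    have : 0 < y ^ (a + k) * (Real.Gamma a * k.factorial / Real.Gamma (a + k + 1)) := by positivity
    linarith
  · refine (ae_restrict_iff' measurableSet_Ioc).mpr <| ae_of_all _ fun x hx => ?_
    have := hx.1
    have : 0 ≤ y - x := by linarith [hx.2]
    simp only [Pi.zero_apply]
    positivity

lemma aux_gamma (s c : ℝ) (hs : 0 < s) (hc : 0 < c) :
    ∫⁻ x in Set.Ioi (0 : ℝ), ENNReal.ofReal (x ^ (s - 1) * Real.exp (-(c * x))) =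
      ENNReal.ofReal ((1 / c) ^ s * Real.Gamma s) := by
  have h1 := Real.integral_rpow_mul_exp_neg_mul_Ioi hs hc
  rw [← h1, ofReal_integral_eq_lintegral_ofReal]
  · by_contra hcc
    have := integral_undef hcc
    rw [h1] at this
    have h3 : 0 < Real.Gamma s := Real.Gamma_pos_of_pos hs
    have : 0 < (1 / c) ^ s * Real.Gamma s := by positivity
    linarith
  · refine (ae_restrict_iff' measurableSet_Ioi).mpr <| ae_of_all _ fun x hx => ?_
    have : 0 < x := hx
    simp only [Pi.zero_apply]
    positivity

lemma aux_inc (a r y : ℝ) (ha : 0 < a) (hr : 0 < r) (hy : 0 < y) :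
    gammaMeasure a r (Set.Iic y) =
      ∑' k : ℕ, ENNReal.ofReal ((r * y) ^ (a + k) * Real.exp (-(r * y)) / Real.Gamma (a + k + 1)) := by
  have hG : 0 < Real.Gamma a := Real.Gamma_pos_of_pos ha
  rw [gammaMeasure, withDensity_apply _ measurableSet_Iic,
    lintegral_Iic_eq_lintegral_Iio_add_Icc _ hy.le, lintegral_gammaPDF_of_nonpos le_rfl, zero_add,
    setLIntegral_congr Ioc_ae_eq_Icc.symm]
  have e : ∀ x ∈ Set.Ioc 0 y, gammaPDF a r x =
      ∑' k : ℕ, ENNReal.ofReal (r ^ a / Real.Gamma a * Real.exp (-(r * y)) * (r ^ k / k.factorial)) *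
        ENNReal.ofReal (x ^ (a - 1) * (y - x) ^ k) := by
    intro x hx
    have hx0 := hx.1
    have hxy : 0 ≤ y - x := by linarith [hx.2]
    have hs : HasSum (fun k : ℕ => (r * (y - x)) ^ k / k.factorial) (Real.exp (r * (y - x))) := by
      rw [Real.exp_eq_exp_ℝ]
      exact NormedSpace.expSeries_div_hasSum_exp _
    have hs2 := hs.mul_left (r ^ a / Real.Gamma a * x ^ (a - 1) * Real.exp (-(r * y)))
    rw [gammaPDF_of_nonneg hx0.le]
    have : r ^ a / Real.Gamma a * x ^ (a - 1) * Real.exp (-(r * x)) =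
        r ^ a / Real.Gamma a * x ^ (a - 1) * Real.exp (-(r * y)) * Real.exp (r * (y - x)) := by
      rw [mul_assoc _ (Real.exp _), ← Real.exp_add]
      ring_nf
    rw [this, ← hs2.tsum_eq, ENNReal.ofReal_tsum_of_nonneg (fun k => by positivity) hs2.summable]
    congr 1 with k
    rw [← ENNReal.ofReal_mul (by positivity)]
    congr 1
    rw [mul_pow]
    ring
  rw [setLIntegral_congr_fun measurableSet_Ioc e, lintegral_tsum (fun k => by fun_prop)]
  congr 1 with k
  have hGk : 0 < Real.Gamma (a + k + 1) := Real.Gamma_pos_of_pos (by positivity)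
  rw [lintegral_const_mul _ (by fun_prop), aux_beta a y ha hy, ← ENNReal.ofReal_mul (by positivity)]
  congr 1
  rw [Real.mul_rpow hr.le hy.le, Real.rpow_add hr, Real.rpow_natCast]
  field_simp

lemma aux_poch (z : ℝ) (hz : 0 < z) (k : ℕ) :
    Real.Gamma (z + k) = Real.Gamma z * (ascPochhammer ℝ k).eval z := by
  induction k with
  | zero => simp
  | succ n ih =>
    rw [ascPochhammer_succ_right]
    push_cast
    rw [← add_assoc, Real.Gamma_add_one (by positivity), ih]
    simp
    ring

lemma aux_term (νT νI q : ℝ) (rT rI β : ℝ) (hνT : 0 < νT) (hνI : 0 < νI) (hq : 0 < q)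
    (hT : 0 < rT) (hI : 0 < rI) (hβ : 0 < β) (hqe : q = β * rT / rI) (k : ℕ) :
    rT ^ νT / Real.Gamma νT * (rI / β) ^ (νI + k) / Real.Gamma (νI + k + 1) *
      ((1 / (rT + rI / β)) ^ (νT + νI + k) * Real.Gamma (νT + νI + k)) =
    q ^ νT * Real.Gamma (νT + νI) /
            (νI * (q + 1) ^ (νT + νI) * Real.Gamma νT * Real.Gamma νI) *
      ((ascPochhammer ℝ k).eval (νT + νI) / (ascPochhammer ℝ k).eval (νI + 1) *
        (1 / (q + 1)) ^ k) := by
  have hGT : 0 < Real.Gamma νT := Real.Gamma_pos_of_pos hνT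
  have hGI : 0 < Real.Gamma νI := Real.Gamma_pos_of_pos hνI
  have hP : 0 < (ascPochhammer ℝ k).eval (νI + 1) := ascPochhammer_pos k _ (by positivity)
  have e1 : 1 / (rT + rI / β) = (β / rI) * (1 / (q + 1)) := by
    rw [hqe]; field_simp
  have e2 : rT = q * (rI / β) := by rw [hqe]; field_simp
  have e3 : νI + k + 1 = νI + 1 + (k : ℝ) := by ring
  rw [e1, e3, aux_poch _ (by positivity), aux_poch _ (by positivity), Real.Gamma_add_one hνI.ne', e2]
  have e4 : β / rI = (rI / β)⁻¹ := by simp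
  rw [e4]
  have hm : 0 < rI / β := by positivity
  generalize rI / β = m at hm
  rw [Real.mul_rpow hq.le hm.le, Real.mul_rpow (by positivity) (by positivity),
    Real.inv_rpow hm.le, Real.rpow_add (x := 1 / (q + 1)) (by positivity), Real.rpow_natCast,
    Real.div_rpow zero_le_one (by positivity), Real.one_rpow, add_assoc νT νI, Real.rpow_add hm νT]
  field_simp

/-- Corollary 1: the CDF of the ratio of two independent Gamma random variables. -/
theorem gamma_ratio_cdf {Ω : Type*} [MeasurableSpace Ω] (P : Measure Ω)
    [IsProbabilityMeasure P] (νT θT νI θI β : ℝ)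
    (hνT : 0 < νT) (hθT : 0 < θT) (hνI : 0 < νI) (hθI : 0 < θI) (hβ : 0 < β)
    (T I : Ω → ℝ) (hTmeas : Measurable T) (hImeas : Measurable I)
    (hT : P.map T = gammaMeasure νT θT⁻¹) (hI : P.map I = gammaMeasure νI θI⁻¹)
    (hTI : IndepFun T I P) :
    (P {ω | T ω < β * I ω}).toReal =
      1 - (β * θI / θT) ^ νT * Real.Gamma (νT + νI) /
            (νI * (β * θI / θT + 1) ^ (νT + νI) * Real.Gamma νT * Real.Gamma νI) *
          hyp2F1One (νT + νI) (νI + 1) (1 / (β * θI / θT + 1)) := by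
  have hGT : 0 < Real.Gamma νT := Real.Gamma_pos_of_pos hνT
  have hrT : 0 < θT⁻¹ := by positivity
  have hrI : 0 < θI⁻¹ := by positivity
  haveI := isProbabilityMeasure_gammaMeasure hνT hrT
  haveI := isProbabilityMeasure_gammaMeasure hνI hrI
  have hS : MeasurableSet {ω | β * I ω ≤ T ω} := measurableSet_le (by fun_prop) hTmeas
  have hcompl : {ω | T ω < β * I ω} = {ω | β * I ω ≤ T ω}ᶜ := by ext; simp
  have hS2 : MeasurableSet {p : ℝ × ℝ | β * p.2 ≤ p.1} := measurableSet_le (by fun_prop) (by fun_prop)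
  have key : P {ω | β * I ω ≤ T ω} = ∑' k : ℕ, ENNReal.ofReal (
      (β * θI / θT) ^ νT * Real.Gamma (νT + νI) /
            (νI * (β * θI / θT + 1) ^ (νT + νI) * Real.Gamma νT * Real.Gamma νI) *
      ((ascPochhammer ℝ k).eval (νT + νI) / (ascPochhammer ℝ k).eval (νI + 1) *
        (1 / (β * θI / θT + 1)) ^ k)) := by
    have h1 : P {ω | β * I ω ≤ T ω} =
        ((gammaMeasure νT θT⁻¹).prod (gammaMeasure νI θI⁻¹)) {p : ℝ × ℝ | β * p.2 ≤ p.1} := by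
      rw [← hT, ← hI, ← hTI.map_prod_eq_prod_map_map hTmeas.aemeasurable hImeas.aemeasurable,
        Measure.map_apply (by fun_prop) hS2]
      rfl
    have h2 : ∀ t : ℝ, Prod.mk t ⁻¹' {p : ℝ × ℝ | β * p.2 ≤ p.1} = Set.Iic (t / β) := by
      intro t
      ext x
      simp [le_div_iff₀ hβ, mul_comm]
    have hmeas : Measurable fun t : ℝ => gammaMeasure νI θI⁻¹ (Set.Iic (t / β)) := by
      have := measurable_measure_prodMk_left (ν := gammaMeasure νI θI⁻¹) hS2
      simpa only [h2] using this
    have hpdf : Measurable (gammaPDF νT θT⁻¹) := (measurable_gammaPDFReal _ _).ennreal_ofReal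
    rw [h1, Measure.prod_apply hS2]
    simp only [h2]
    rw [gammaMeasure, lintegral_withDensity_eq_lintegral_mul _ hpdf hmeas,
      ← lintegral_add_compl _ (measurableSet_Ioi (a := (0 : ℝ))), Set.compl_Ioi,
      setLIntegral_congr Iio_ae_eq_Iic.symm,
      setLIntegral_congr_fun (g := fun _ => 0) measurableSet_Iio
        (fun x hx => by simp [gammaPDF_of_neg hx]), lintegral_zero, add_zero]
    have e : ∀ t ∈ Set.Ioi (0 : ℝ), (gammaPDF νT θT⁻¹ * fun t => gammaMeasure νI θI⁻¹ (Set.Iic (t / β))) t =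
        ∑' k : ℕ, ENNReal.ofReal (θT⁻¹ ^ νT / Real.Gamma νT * (θI⁻¹ / β) ^ (νI + k) /
            Real.Gamma (νI + k + 1)) *
          ENNReal.ofReal (t ^ (νT + νI + k - 1) * Real.exp (-((θT⁻¹ + θI⁻¹ / β) * t))) := by
      intro t ht
      have ht : 0 < t := ht
      rw [Pi.mul_apply, aux_inc _ _ _ hνI hrI (by positivity), gammaPDF_of_nonneg ht.le,
        ← ENNReal.tsum_mul_left]
      congr 1 with k
      have hGk : 0 < Real.Gamma (νI + k + 1) := Real.Gamma_pos_of_pos (by positivity)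
      rw [← ENNReal.ofReal_mul (by positivity), ← ENNReal.ofReal_mul (by positivity)]
      congr 1
      have a1 : θI⁻¹ * (t / β) = θI⁻¹ / β * t := by ring
      have a2 : Real.exp (-((θT⁻¹ + θI⁻¹ / β) * t)) =
          Real.exp (-(θT⁻¹ * t)) * Real.exp (-(θI⁻¹ / β * t)) := by
        rw [← Real.exp_add]; ring_nf
      have a3 : νT + νI + k - 1 = (νT - 1) + (νI + k) := by ring
      rw [a1, a2, a3, Real.rpow_add ht, Real.mul_rpow (by positivity) ht.le]
      ring
    rw [setLIntegral_congr_fun measurableSet_Ioi e, lintegral_tsum (fun k => by fun_prop)]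
    congr 1 with k
    have hGk : 0 < Real.Gamma (νI + k + 1) := Real.Gamma_pos_of_pos (by positivity)
    rw [lintegral_const_mul _ (by fun_prop), aux_gamma _ _ (by positivity) (by positivity),
      ← ENNReal.ofReal_mul (by positivity),
      aux_term νT νI (β * θI / θT) _ _ β hνT hνI (by positivity) hrT hrI hβ (by field_simp)]
  rw [hcompl, prob_compl_eq_one_sub hS, ENNReal.toReal_sub_of_le prob_le_one ENNReal.one_ne_top, key,
    ENNReal.tsum_toReal_eq (fun _ => ENNReal.ofReal_ne_top), hyp2F1One, ← tsum_mul_left,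
    ENNReal.toReal_one]
  congr 2 with k
  have h4 : 0 < (ascPochhammer ℝ k).eval (νI + 1) := ascPochhammer_pos k _ (by positivity)
  have h5 : 0 < (ascPochhammer ℝ k).eval (νT + νI) := ascPochhammer_pos k _ (by positivity)
  have h6 : 0 < Real.Gamma νI := Real.Gamma_pos_of_pos hνI
  have h7 : 0 < Real.Gamma (νT + νI) := Real.Gamma_pos_of_pos (by positivity)
  rw [ENNReal.toReal_ofReal (by positivity)]
end

section
/- Let a, p, μ, ν > 0 be real numbers. Then ∫_0^∞ x^(μ−1) e^(−p x) Γ(ν, a x) dx = (a^ν Γ(μ + ν)) / (μ (a + p)^{μ + ν}) · ₂F₁(1, μ + ν; μ + 1; p/(a + p)), where Γ(ν, y) is the upper incomplete gamma function and Γ is the Euler Gamma function. -/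
open MeasureTheory Polynomial

/-- The upper incomplete gamma function `Γ(s, y) = ∫_y^∞ t^(s-1) e^(-t) dt`. -/
noncomputable def upperGamma (s y : ℝ) : ℝ :=
  ∫ t in Set.Ioi y, t ^ (s - 1) * Real.exp (-t)

lemma aux_int (m c : ℝ) (hm : 0 < m) (hc : 0 < c) :
    IntegrableOn (fun x : ℝ => x ^ (m - 1) * Real.exp (-(c * x))) (Set.Ioi 0) := by
  have h := integrableOn_rpow_mul_exp_neg_mul_rpow (p := 1) (s := m - 1) (b := c)
    (by linarith) one_pos hc
  simpa [Real.rpow_one] using h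

lemma uG_nonneg (ν y : ℝ) (hy : 0 ≤ y) : 0 ≤ upperGamma ν y := by
  unfold upperGamma
  refine setIntegral_nonneg measurableSet_Ioi fun t ht => ?_
  have : 0 < t := lt_of_le_of_lt hy ht
  positivity

lemma uG_le (ν : ℝ) (hν : 0 < ν) : ∃ C : ℝ, 0 ≤ C ∧ ∀ y : ℝ, 0 ≤ y →
    upperGamma ν y ≤ C * Real.exp (-(y / 2)) := by
  have h2 := aux_int ν (1/2) hν (by norm_num)
  refine ⟨∫ t in Set.Ioi 0, t ^ (ν - 1) * Real.exp (-(1/2 * t)), ?_, fun y hy => ?_⟩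
  · refine setIntegral_nonneg measurableSet_Ioi fun t ht => ?_
    have : 0 < t := ht
    positivity
  · have hsub : Set.Ioi y ⊆ Set.Ioi 0 := Set.Ioi_subset_Ioi hy
    have h1 := aux_int ν 1 hν one_pos
    simp only [one_mul] at h1
    unfold upperGamma
    calc ∫ t in Set.Ioi y, t ^ (ν - 1) * Real.exp (-t)
        ≤ ∫ t in Set.Ioi y, (t ^ (ν - 1) * Real.exp (-(1/2 * t))) * Real.exp (-(y / 2)) := by
          refine setIntegral_mono_on (h1.mono_set hsub) ((h2.mono_set hsub).mul_const _)
            measurableSet_Ioi fun t ht => ?_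
          have ht0 : 0 < t := hsub ht
          have hty : y < t := ht
          rw [mul_assoc, ← Real.exp_add]
          gcongr
          linarith
      _ ≤ _ := by
          rw [integral_mul_const]
          refine mul_le_mul_of_nonneg_right ?_ (Real.exp_pos _).le
          refine setIntegral_mono_set h2 ?_ hsub.eventuallyLE
          filter_upwards [ae_restrict_mem measurableSet_Ioi] with t ht
          have : 0 < t := ht
          simp only [Pi.zero_apply]
          positivity

lemma uG_deriv (ν y : ℝ) (hν : 0 < ν) (hy : 0 < y) :
    HasDerivAt (upperGamma ν) (-(y ^ (ν - 1) * Real.exp (-y))) y := by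
  have h1 := aux_int ν 1 hν one_pos
  simp only [one_mul] at h1
  have hcont : ContinuousOn (fun t : ℝ => t ^ (ν - 1) * Real.exp (-t)) (Set.Ioi 0) := by
    intro t ht
    have : t ≠ 0 := ne_of_gt ht
    exact ((Real.continuousAt_rpow_const t _ (Or.inl this)).mul
      (by fun_prop)).continuousWithinAt
  have hI : ∀ z : ℝ, 0 ≤ z → IntervalIntegrable (fun t : ℝ => t ^ (ν - 1) * Real.exp (-t))
      volume 0 z := fun z hz => by
    rw [intervalIntegrable_iff_integrableOn_Ioc_of_le hz]
    exact h1.mono_set Set.Ioc_subset_Ioi_self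
  have hd := intervalIntegral.integral_hasDerivAt_right (hI y hy.le)
    (hcont.stronglyMeasurableAtFilter isOpen_Ioi y hy) (hcont.continuousAt (Ioi_mem_nhds hy))
  have := hd.const_sub (upperGamma ν 0)
  refine this.congr_of_eventuallyEq ?_
  filter_upwards [Ioi_mem_nhds hy] with z hz
  have hz' : (0:ℝ) < z := hz
  have := intervalIntegral.integral_interval_add_Ioi (a := 0) (b := z) (μ := volume)
    (f := fun t : ℝ => t ^ (ν - 1) * Real.exp (-t)) h1
    (h1.mono_set (Set.Ioi_subset_Ioi hz'.le))
  unfold upperGamma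
  linarith

noncomputable def JJ (a p ν μ : ℝ) : ℝ :=
  ∫ x in Set.Ioi (0 : ℝ), x ^ (μ - 1) * Real.exp (-(p * x)) * upperGamma ν (a * x)

lemma JJ_facts (a p ν : ℝ) (ha : 0 < a) (hp : 0 < p) (hν : 0 < ν) : ∃ C : ℝ, 0 ≤ C ∧
    ∀ μ, 0 < μ → IntegrableOn (fun x : ℝ =>
      x ^ (μ - 1) * Real.exp (-(p * x)) * upperGamma ν (a * x)) (Set.Ioi 0) ∧ 0 ≤ JJ a p ν μ ∧
      JJ a p ν μ ≤ C * ((1 / (p + a / 2)) ^ μ * Real.Gamma μ) := by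
  obtain ⟨C, hC, hle⟩ := uG_le ν hν
  refine ⟨C, hC, fun μ hμ => ?_⟩
  have hq : 0 < p + a / 2 := by positivity
  have hb := (aux_int μ (p + a / 2) hμ hq).const_mul C
  have hpt : ∀ x ∈ Set.Ioi (0:ℝ), x ^ (μ - 1) * Real.exp (-(p * x)) * upperGamma ν (a * x) ≤
      C * (x ^ (μ - 1) * Real.exp (-((p + a / 2) * x))) := by
    intro x hx
    have hx0 : 0 < x := hx
    calc _ ≤ x ^ (μ - 1) * Real.exp (-(p * x)) * (C * Real.exp (-(a * x / 2))) := by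
            gcongr
            exact hle _ (by positivity)
      _ = _ := by
            have : -((p + a / 2) * x) = -(p * x) + -(a * x / 2) := by ring
            rw [this, Real.exp_add]
            ring
  have hnn : ∀ x ∈ Set.Ioi (0:ℝ),
      0 ≤ x ^ (μ - 1) * Real.exp (-(p * x)) * upperGamma ν (a * x) := by
    intro x hx
    have hx0 : 0 < x := hx
    have := uG_nonneg ν (a * x) (by positivity)
    positivity
  have hint : IntegrableOn (fun x : ℝ =>
      x ^ (μ - 1) * Real.exp (-(p * x)) * upperGamma ν (a * x)) (Set.Ioi 0) := by
    refine Integrable.mono' hb ?_ ?_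
    · refine ContinuousOn.aestronglyMeasurable ?_ measurableSet_Ioi
      intro x hx
      have hx0 : 0 < x := hx
      refine ContinuousAt.continuousWithinAt ?_
      refine ((Real.continuousAt_rpow_const x _ (Or.inl hx0.ne')).mul (by fun_prop)).mul ?_
      exact ContinuousAt.comp (f := fun x => a * x) (g := upperGamma ν)
        (uG_deriv ν (a * x) hν (by positivity)).continuousAt (by fun_prop)
    · filter_upwards [ae_restrict_mem measurableSet_Ioi] with x hx
      rw [Real.norm_of_nonneg (hnn x hx)]
      exact hpt x hx
  refine ⟨hint, setIntegral_nonneg measurableSet_Ioi hnn, ?_⟩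
  rw [← Real.integral_rpow_mul_exp_neg_mul_Ioi hμ hq, ← integral_const_mul]
  exact setIntegral_mono_on hint hb measurableSet_Ioi hpt

lemma JJ_rec (a p ν μ : ℝ) (ha : 0 < a) (hp : 0 < p) (hν : 0 < ν) (hμ : 0 < μ) :
    μ * JJ a p ν μ = p * JJ a p ν (μ + 1) +
      a ^ ν * ((1 / (a + p)) ^ (μ + ν) * Real.Gamma (μ + ν)) := by
  obtain ⟨C, hC, hJ⟩ := JJ_facts a p ν ha hp hν
  have i1 := (hJ μ hμ).1
  have i2 := (hJ (μ + 1) (by linarith)).1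
  have i3 := aux_int (μ + ν) (a + p) (by linarith) (by linarith)
  obtain ⟨D, hD, hle⟩ := uG_le ν hν
  have hder : ∀ x ∈ Set.Ioi (0:ℝ), HasDerivAt
      (fun x : ℝ => x ^ μ * Real.exp (-(p * x)) * upperGamma ν (a * x))
      (μ * (x ^ (μ - 1) * Real.exp (-(p * x)) * upperGamma ν (a * x)) -
        p * (x ^ (μ + 1 - 1) * Real.exp (-(p * x)) * upperGamma ν (a * x)) -
        a ^ ν * (x ^ (μ + ν - 1) * Real.exp (-((a + p) * x)))) x := by
    intro x hx
    have hx0 : 0 < x := hx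
    have d1 := Real.hasDerivAt_rpow_const (x := x) (p := μ) (Or.inl hx0.ne')
    have d2 : HasDerivAt (fun x : ℝ => Real.exp (-(p * x))) (Real.exp (-(p * x)) * -(p * 1)) x :=
      (((hasDerivAt_id x).const_mul p).neg).exp
    have d3 : HasDerivAt (fun x : ℝ => upperGamma ν (a * x))
        (-((a * x) ^ (ν - 1) * Real.exp (-(a * x))) * (a * 1)) x :=
      HasDerivAt.comp x (h₂ := upperGamma ν) (h := fun x => a * x)
        (uG_deriv ν (a * x) hν (by positivity)) ((hasDerivAt_id x).const_mul a)
    refine ((d1.mul d2).mul d3).congr_deriv ?_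
    have e1 : (a * x) ^ (ν - 1) * a = a ^ ν * x ^ (ν - 1) := by
      rw [Real.mul_rpow ha.le hx0.le, Real.rpow_sub_one ha.ne']
      field_simp
    have e2 : x ^ (μ + ν - 1) = x ^ μ * x ^ (ν - 1) := by
      rw [← Real.rpow_add hx0]; congr 1; ring
    have e3 : Real.exp (-((a + p) * x)) = Real.exp (-(p * x)) * Real.exp (-(a * x)) := by
      rw [← Real.exp_add]; congr 1; ring
    rw [e2, e3, add_sub_cancel_right]
    simp only [Pi.mul_apply]
    linear_combination (-(x ^ μ * Real.exp (-(p * x)) * Real.exp (-(a * x)))) * e1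
  have hbd : ∀ x : ℝ, 0 ≤ x →
      ‖x ^ μ * Real.exp (-(p * x)) * upperGamma ν (a * x)‖ ≤
        D * (x ^ μ * Real.exp (-p * x)) := by
    intro x hx
    have h0 := uG_nonneg ν (a * x) (by positivity)
    rw [Real.norm_of_nonneg (by positivity), neg_mul, mul_comm D]
    gcongr
    refine (hle _ (by positivity)).trans ?_
    refine mul_le_of_le_one_right hD ?_
    rw [Real.exp_le_one_iff]
    have : 0 ≤ a * x := by positivity
    linarith
  have hz : (0:ℝ) ^ μ = 0 := Real.zero_rpow hμ.ne'
  have hc0 : ContinuousWithinAt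
      (fun x : ℝ => x ^ μ * Real.exp (-(p * x)) * upperGamma ν (a * x)) (Set.Ici 0) 0 := by
    unfold ContinuousWithinAt
    simp only [hz, zero_mul]
    refine squeeze_zero_norm' (a := fun x => D * (x ^ μ * Real.exp (-p * x))) ?_ ?_
    · filter_upwards [self_mem_nhdsWithin] with x hx using hbd x hx
    · have : ContinuousAt (fun x : ℝ => D * (x ^ μ * Real.exp (-p * x))) 0 :=
        continuousAt_const.mul ((Real.continuousAt_rpow_const 0 μ (Or.inr hμ.le)).mul (by fun_prop))
      have h := this.tendsto
      simp only [hz, zero_mul, mul_zero] at h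
      exact h.mono_left nhdsWithin_le_nhds
  have hinf : Filter.Tendsto (fun x : ℝ => x ^ μ * Real.exp (-(p * x)) * upperGamma ν (a * x))
      Filter.atTop (nhds 0) := by
    refine squeeze_zero_norm' (a := fun x => D * (x ^ μ * Real.exp (-p * x))) ?_ ?_
    · filter_upwards [Filter.eventually_ge_atTop 0] with x hx using hbd x hx
    · simpa using (tendsto_rpow_mul_exp_neg_mul_atTop_nhds_zero μ p hp).const_mul D
  have i12 : IntegrableOn (fun x : ℝ =>
      μ * (x ^ (μ - 1) * Real.exp (-(p * x)) * upperGamma ν (a * x)) -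
        p * (x ^ (μ + 1 - 1) * Real.exp (-(p * x)) * upperGamma ν (a * x))) (Set.Ioi 0) :=
    (i1.const_mul μ).sub (i2.const_mul p)
  have key := integral_Ioi_of_hasDerivAt_of_tendsto hc0 hder
    (i12.sub (i3.const_mul (a ^ ν))) hinf
  rw [integral_sub i12 (i3.const_mul (a ^ ν)),
    integral_sub (i1.const_mul μ) (i2.const_mul p), integral_const_mul, integral_const_mul,
    integral_const_mul, Real.integral_rpow_mul_exp_neg_mul_Ioi (by linarith) (by linarith)] at key
  simp only [hz, zero_mul, sub_zero] at key
  unfold JJ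
  linarith

lemma Gamma_poch (s : ℝ) (hs : 0 < s) (n : ℕ) :
    Real.Gamma (s + n) = (ascPochhammer ℝ n).eval s * Real.Gamma s := by
  induction n with
  | zero => simp
  | succ n ih =>
    rw [ascPochhammer_succ_eval, Nat.cast_succ, ← add_assoc,
      Real.Gamma_add_one (by positivity), ih]
    ring

lemma poch_shift (s : ℝ) (n : ℕ) : (ascPochhammer ℝ n).eval s * (s + n) =
    s * (ascPochhammer ℝ n).eval (s + 1) := by
  rw [← ascPochhammer_succ_eval, ascPochhammer_succ_left]
  simp

lemma JJ_sum (a p ν μ : ℝ) (ha : 0 < a) (hp : 0 < p) (hν : 0 < ν) (hμ : 0 < μ) (n : ℕ) :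
    JJ a p ν μ = (∑ k ∈ Finset.range n, a ^ ν * Real.Gamma (μ + ν) / (μ * (a + p) ^ (μ + ν)) *
      (((ascPochhammer ℝ k).eval (μ + ν) / (ascPochhammer ℝ k).eval (μ + 1)) *
        (p / (a + p)) ^ k)) + p ^ n / (ascPochhammer ℝ n).eval μ * JJ a p ν (μ + n) := by
  induction n with
  | zero => simp
  | succ n ih =>
    rw [ih, Finset.sum_range_succ, add_assoc]
    congr 1
    have hr := JJ_rec a p ν (μ + n) ha hp hν (by positivity)
    have hap : 0 < a + p := by positivity
    have p1 := ascPochhammer_pos n μ hμ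
    have p2 := ascPochhammer_pos n (μ + 1) (by positivity)
    have hs := poch_shift μ n
    have hm : 0 < μ + n := by positivity
    have e : μ + n + ν = μ + ν + n := by ring
    rw [e, Gamma_poch _ (by positivity), one_div, Real.inv_rpow hap.le,
      Real.rpow_add_natCast hap.ne'] at hr
    rw [ascPochhammer_succ_eval, Nat.cast_succ, ← add_assoc]
    have hJ : JJ a p ν (μ + n) = (p * JJ a p ν (μ + n + 1) + a ^ ν * (((a + p) ^ (μ + ν) *
        (a + p) ^ n)⁻¹ * ((ascPochhammer ℝ n).eval (μ + ν) * Real.Gamma (μ + ν)))) / (μ + n) := by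
      rw [← hr]; field_simp
    rw [hJ]
    have hP : (ascPochhammer ℝ n).eval (μ + 1) = (ascPochhammer ℝ n).eval μ * (μ + n) / μ := by
      rw [hs]; field_simp
    rw [hP]
    have hR : 0 < (a + p) ^ (μ + ν) := by positivity
    generalize (a + p) ^ (μ + ν) = R at *
    rw [div_pow]
    field_simp
    ring

/-- Gradshteyn–Ryzhik Eq. 6.455.1. -/
theorem integral_rpow_exp_upperGamma (a p μ ν : ℝ)
    (ha : 0 < a) (hp : 0 < p) (hμ : 0 < μ) (hν : 0 < ν) :
    ∫ x in Set.Ioi (0 : ℝ), x ^ (μ - 1) * Real.exp (-(p * x)) * upperGamma ν (a * x) =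
      a ^ ν * Real.Gamma (μ + ν) / (μ * (a + p) ^ (μ + ν)) *
        hyp2F1One (μ + ν) (μ + 1) (p / (a + p)) := by
  change JJ a p ν μ = _
  obtain ⟨C, hC, hJ⟩ := JJ_facts a p ν ha hp hν
  have hq : 0 < p + a / 2 := by positivity
  have hrem : Filter.Tendsto (fun n : ℕ => p ^ n / (ascPochhammer ℝ n).eval μ * JJ a p ν (μ + n))
      Filter.atTop (nhds 0) := by
    have hg := (tendsto_pow_atTop_nhds_zero_of_lt_one (r := p / (p + a / 2)) (by positivity)
      (by rw [div_lt_one hq]; linarith)).const_mul (C * ((1 / (p + a / 2)) ^ μ * Real.Gamma μ))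
    rw [mul_zero] at hg
    refine squeeze_zero (fun n => ?_) (fun n => ?_) hg
    · have p1 := ascPochhammer_pos n μ hμ
      have := (hJ (μ + n) (by positivity)).2.1
      positivity
    · have p1 := ascPochhammer_pos n μ hμ
      have h2 := (hJ (μ + n) (by positivity)).2.2
      rw [Gamma_poch μ hμ, Real.rpow_add_natCast (by positivity)] at h2
      refine (mul_le_mul_of_nonneg_left h2 (by positivity)).trans (le_of_eq ?_)
      generalize (1 / (p + a / 2)) ^ μ = R
      rw [div_pow, div_pow, one_pow]
      field_simp
  unfold hyp2F1One
  rw [← tsum_mul_left]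
  symm
  refine HasSum.tsum_eq ?_
  rw [hasSum_iff_tendsto_nat_of_nonneg]
  · have := (tendsto_const_nhds (x := JJ a p ν μ)).sub hrem
    rw [sub_zero] at this
    refine this.congr fun n => ?_
    have := JJ_sum a p ν μ ha hp hν hμ n
    linarith
  · intro k
    have p1 := ascPochhammer_pos k (μ + ν) (by positivity)
    have p2 := ascPochhammer_pos k (μ + 1) (by positivity)
    have := Real.Gamma_pos_of_pos (s := μ + ν) (by positivity)
    positivity
end
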